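/- Suppose b > 1, q ∈ ℂ with 0 < |q| ≤ 1 - 1/b, and x ∈ ℂ with |x| > 1. Let κ be the least positive integer m for which |x q^m| < 1. Then the infinite product U := Π_{m=κ+1}^∞ (1 + x q^m) satisfies |U| ≥ e^{(π²/6)(1-b)}. -/

import Mathlib

lemma aux_coef (b r : ℝ) (hb : 1 < b) (hr0 : 0 < r) (hr : r ≤ 1 - 1 / b) (s N : ℕ) :
    ∑ n ∈ Finset.range N, (r ^ (n + 1)) ^ (s + 1) / ((s : ℝ) + 1)
      ≤ (b - 1) * (1 / ((s + 1 : ℕ) : ℝ) ^ 2) := by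
  have hb0 : 0 < b := by linarith
  have hr1 : r < 1 := by
    have : 0 < 1 / b := by positivity
    linarith
  have hrb : r ≤ (b - 1) * (1 - r) := by
    have h1 : r * b ≤ b - 1 := by
      have := mul_le_mul_of_nonneg_right hr hb0.le
      have h2 : (1 - 1 / b) * b = b - 1 := by field_simp
      linarith
    nlinarith
  set t := r ^ (s + 1) with ht
  have ht0 : 0 < t := by positivity
  have ht1 : t < 1 := pow_lt_one₀ hr0.le hr1 (by omega)
  have hgeo : (∑ n ∈ Finset.range N, t ^ (n + 1)) * (1 - t) ≤ t := by
    have h := geom_sum_mul_neg t N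
    have h3 : ∑ n ∈ Finset.range N, t ^ (n + 1) = t * ∑ n ∈ Finset.range N, t ^ n := by
      rw [Finset.mul_sum]
      exact Finset.sum_congr rfl fun n _ => by ring
    rw [h3, mul_assoc, h]
    have : 0 ≤ t ^ N := by positivity
    nlinarith
  have hlow : ((s : ℝ) + 1) * r ^ s * (1 - r) ≤ 1 - t := by
    rw [ht, ← geom_sum_mul_neg r (s + 1)]
    apply mul_le_mul_of_nonneg_right _ (by linarith)
    have : ∑ n ∈ Finset.range (s + 1), r ^ s ≤ ∑ n ∈ Finset.range (s + 1), r ^ n := by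
      apply Finset.sum_le_sum
      intro i hi
      exact pow_le_pow_of_le_one hr0.le hr1.le (by have := Finset.mem_range.mp hi; omega)
    simpa using this
  have hkey : t * ((s : ℝ) + 1) ≤ (b - 1) * (1 - t) := by
    calc t * ((s : ℝ) + 1) = ((s : ℝ) + 1) * r ^ s * r := by rw [ht]; ring
      _ ≤ ((s : ℝ) + 1) * r ^ s * ((b - 1) * (1 - r)) := by gcongr
      _ = (b - 1) * (((s : ℝ) + 1) * r ^ s * (1 - r)) := by ring
      _ ≤ _ := mul_le_mul_of_nonneg_left hlow (by linarith)
  have h1t : 0 < 1 - t := by linarith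
  have hsum : (∑ n ∈ Finset.range N, t ^ (n + 1)) * ((s : ℝ) + 1) ≤ b - 1 := by
    refine le_of_mul_le_mul_right ?_ h1t
    calc _ = (∑ n ∈ Finset.range N, t ^ (n + 1)) * (1 - t) * ((s : ℝ) + 1) := by ring
      _ ≤ t * ((s : ℝ) + 1) := by gcongr
      _ ≤ _ := hkey
  have heq : ∑ n ∈ Finset.range N, (r ^ (n + 1)) ^ (s + 1) / ((s : ℝ) + 1)
      = (∑ n ∈ Finset.range N, t ^ (n + 1)) / ((s : ℝ) + 1) := by
    rw [Finset.sum_div]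
    exact Finset.sum_congr rfl fun n _ => by rw [ht, pow_right_comm]
  rw [heq]
  have hs : (0 : ℝ) < (s : ℝ) + 1 := by positivity
  push_cast
  rw [mul_one_div, div_le_div_iff₀ hs (by positivity)]
  nlinarith

lemma aux_prod (b r : ℝ) (hb : 1 < b) (hr0 : 0 < r) (hr : r ≤ 1 - 1 / b) (N : ℕ) :
    Real.exp ((Real.pi ^ 2 / 6) * (1 - b)) ≤ ∏ n ∈ Finset.range N, (1 - r ^ (n + 1)) := by
  have hb0 : 0 < b := by linarith
  have hr1 : r < 1 := by
    have : 0 < 1 / b := by positivity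
    linarith
  have hlt : ∀ n : ℕ, r ^ (n + 1) < 1 := fun n => pow_lt_one₀ hr0.le hr1 (by omega)
  have h1 : HasSum (fun s : ℕ => ∑ n ∈ Finset.range N, (r ^ (n + 1)) ^ (s + 1) / ((s : ℝ) + 1))
      (∑ n ∈ Finset.range N, -Real.log (1 - r ^ (n + 1))) := by
    apply hasSum_sum
    intro n _
    apply Real.hasSum_pow_div_log_of_abs_lt_one
    rw [abs_of_pos (by positivity)]
    exact hlt n
  have h2 : HasSum (fun s : ℕ => (b - 1) * (1 / ((s + 1 : ℕ) : ℝ) ^ 2))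
      ((b - 1) * (Real.pi ^ 2 / 6)) := by
    apply HasSum.mul_left
    have := (hasSum_nat_add_iff' 1).mpr hasSum_zeta_two
    simpa using this
  have h3 := hasSum_le (fun s => aux_coef b r hb hr0 hr s N) h1 h2
  have hpos : ∀ n ∈ Finset.range N, 1 - r ^ (n + 1) ≠ 0 := fun n _ => by
    have := hlt n
    linarith
  rw [← Real.le_log_iff_exp_le (Finset.prod_pos fun n _ => by have := hlt n; linarith),
    Real.log_prod hpos]
  rw [Finset.sum_neg_distrib] at h3
  linarith


/-- For `b > 1`, `0 < |q| ≤ 1 - 1/b`, `|x| > 1` and `κ` the least positive integer with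
`|x q^κ| < 1`, the product `∏_{m=κ+1}^∞ (1 + x q^m)` satisfies `|·| ≥ e^{(π²/6)(1-b)}`. -/
theorem U_tail_lower_bound (b : ℝ) (hb : 1 < b) (q : ℂ) (hq0 : 0 < ‖q‖) (hq : ‖q‖ ≤ 1 - 1 / b)
    (x : ℂ) (hx : 1 < ‖x‖) (κ : ℕ)
    (hκ : IsLeast {m : ℕ | 1 ≤ m ∧ ‖x * q ^ m‖ < 1} κ) :
    Real.exp ((Real.pi ^ 2 / 6) * (1 - b)) ≤ ‖∏' m : ℕ, (1 + x * q ^ (κ + 1 + m))‖ := by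
  have hb0 : 0 < b := by linarith
  have hr1 : ‖q‖ < 1 := by
    have : 0 < 1 / b := by positivity
    linarith
  have hbd : ∀ m : ℕ, ‖x * q ^ (κ + 1 + m)‖ ≤ ‖q‖ ^ (m + 1) := by
    intro m
    have h : x * q ^ (κ + 1 + m) = (x * q ^ κ) * q ^ (m + 1) := by ring
    rw [h, norm_mul, norm_pow]
    exact mul_le_of_le_one_left (by positivity) hκ.1.2.le
  have hsum : Summable fun m : ℕ => ‖x * q ^ (κ + 1 + m)‖ :=
    Summable.of_nonneg_of_le (fun _ => norm_nonneg _) hbd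
      ((summable_nat_add_iff 1).mpr (summable_geometric_of_lt_one hq0.le hr1))
  have hm := multipliable_one_add_of_summable hsum
  have ht := hm.hasProd.tendsto_prod_nat.norm
  refine ge_of_tendsto' ht fun N => ?_
  refine (aux_prod b ‖q‖ hb hq0 hq N).trans ?_
  rw [norm_prod]
  apply Finset.prod_le_prod
  · intro n _
    have := pow_lt_one₀ hq0.le hr1 (n := n + 1) (by omega)
    linarith
  · intro n _
    have h := norm_sub_norm_le (1 : ℂ) (-(x * q ^ (κ + 1 + n)))
    rw [norm_neg, sub_neg_eq_add, norm_one] at h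
    linarith [hbd n]
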